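/- arXiv:math/0009090 — 6 statements merged into one kernel-verified Lean document; each statement's English description precedes it below -/
import Mathlib

section
/- There is no weakly self-avoiding word over the binary alphabet {0,1} of length greater than 13. -/
/-- The factor `x[i..2i]` of a 1-indexed finite word `x`. -/
def factorAt {α : Type*} (x : List α) (i : ℕ) : List α :=
  (x.drop (i - 1)).take (i + 1)

/-- A finite word `x` of length `n` is weakly self-avoiding if for all `i, j` with
`1 ≤ i < j` and `2j ≤ n`, the word `x[i..2i]` is not a factor of `x[j..2j]`. -/
def WeaklySelfAvoiding {α : Type*} (x : List α) : Prop :=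
  ∀ i j : ℕ, 1 ≤ i → i < j → 2 * j ≤ x.length → ¬ (factorAt x i <:+: factorAt x j)

/-- Being weakly self-avoiding is inherited by prefixes. -/
theorem WeaklySelfAvoiding.of_append {α : Type*} {x y : List α}
    (h : WeaklySelfAvoiding (x ++ y)) : WeaklySelfAvoiding x := by
  have factorAt_append : ∀ i, 1 ≤ i → 2 * i ≤ x.length →
      factorAt (x ++ y) i = factorAt x i := by
    intro i hi hx
    unfold factorAt
    rw [List.drop_append_of_le_length (by omega),
      List.take_append_of_le_length (by rw [List.length_drop]; omega)]
  intro i j hi hij hj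
  have := h i j hi hij (by rw [List.length_append]; omega)
  rwa [factorAt_append i hi (by omega), factorAt_append j (by omega) hj] at this

instance WeaklySelfAvoiding.decidable {α : Type*} [DecidableEq α] (x : List α) :
    Decidable (WeaklySelfAvoiding x) :=
  decidable_of_iff
    (∀ j < x.length / 2 + 1, ∀ i < j, 1 ≤ i → ¬ (factorAt x i <:+: factorAt x j))
    ⟨fun h i j hi hij hj => h j (by omega) i hij hi,
      fun h j hj i hij hi => h i j hi hij (by omega)⟩

/-- Depth-first search certifying that no extension of `w` by `k` binary letters is weakly
self-avoiding. -/
def noExtension : ℕ → List (Fin 2) → Bool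
  | 0, w => !decide (WeaklySelfAvoiding w)
  | k + 1, w => !decide (WeaklySelfAvoiding w) ||
      (noExtension k (w ++ [0]) && noExtension k (w ++ [1]))

theorem not_weaklySelfAvoiding_of_noExtension {k : ℕ} {w : List (Fin 2)}
    (h : noExtension k w = true) (y : List (Fin 2)) (hy : k ≤ y.length) :
    ¬ WeaklySelfAvoiding (w ++ y) := by
  induction k generalizing w y with
  | zero =>
    intro hw
    simp [noExtension, hw.of_append] at h
  | succ k ih =>
    intro hw
    simp only [noExtension, hw.of_append, decide_true, Bool.not_true, Bool.false_or,
      Bool.and_eq_true] at h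
    obtain _ | ⟨a, y⟩ := y
    · simp at hy
    · rw [List.append_cons] at hw
      have hk : k ≤ y.length := by simpa using hy
      obtain rfl | rfl : a = 0 ∨ a = 1 := by omega
      · exact ih h.1 y hk hw
      · exact ih h.2 y hk hw

theorem stmt_1 :
    ∀ x : List (Fin 2), 13 < x.length → ¬ WeaklySelfAvoiding x := by
  intro x hx
  have h : noExtension 14 [] = true := by decide +kernel
  exact not_weaklySelfAvoiding_of_noExtension h x hx
end

section
/- There are exactly 8 weakly self-avoiding binary words of length 13, namely 0010111111010, 0010111111011, 0011110101010, 0011110101011 and the four words obtained from these by exchanging 0 and 1. -/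
theorem factorAt_append {α : Type*} (x y : List α) {i : ℕ} (hi : 1 ≤ i) (h : 2 * i ≤ x.length) :
    factorAt (x ++ y) i = factorAt x i := by
  unfold factorAt
  rw [List.drop_append_of_le_length (by omega),
    List.take_append_of_le_length (by rw [List.length_drop]; omega)]

theorem weaklySelfAvoiding_iff_bounded {α : Type*} (x : List α) :
    WeaklySelfAvoiding x ↔ ∀ j < x.length / 2 + 1, ∀ i < j, 1 ≤ i →
      ¬ (factorAt x i <:+: factorAt x j) :=
  ⟨fun h j hj i hij hi => h i j hi hij (by omega),
    fun h i j hi hij hj => h j (by omega) i hij hi⟩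

instance {α : Type*} [DecidableEq α] (x : List α) : Decidable (WeaklySelfAvoiding x) :=
  decidable_of_iff' _ (weaklySelfAvoiding_iff_bounded x)

/-- The weakly self-avoiding binary words of length `n`, found by extending those of length
`n - 1` by one letter. -/
def weaklySelfAvoidingWords : ℕ → List (List (Fin 2))
  | 0 => [[]]
  | n + 1 => (weaklySelfAvoidingWords n).flatMap fun x =>
      [x ++ [0], x ++ [1]].filter fun y => WeaklySelfAvoiding y

theorem mem_weaklySelfAvoidingWords {n : ℕ} {x : List (Fin 2)} :
    x ∈ weaklySelfAvoidingWords n ↔ x.length = n ∧ WeaklySelfAvoiding x := by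
  induction n generalizing x with
  | zero =>
    simp only [weaklySelfAvoidingWords, List.mem_singleton, List.length_eq_zero_iff]
    refine ⟨?_, And.left⟩
    rintro rfl
    exact ⟨rfl, by decide⟩
  | succ n ih =>
    simp only [weaklySelfAvoidingWords, List.mem_flatMap, List.mem_filter, decide_eq_true_eq, ih]
    constructor
    · rintro ⟨y, ⟨rfl, -⟩, hx, hwx⟩
      refine ⟨?_, hwx⟩
      simp only [List.mem_cons, List.not_mem_nil, or_false] at hx
      rcases hx with rfl | rfl <;> simp
    · rintro ⟨hl, hw⟩
      rcases List.eq_nil_or_concat' x with rfl | ⟨y, a, rfl⟩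
      · simp at hl
      · refine ⟨y, ⟨by simpa using hl, hw.of_append⟩, ?_, hw⟩
        fin_cases a <;> simp

theorem stmt_7 :
    {x : List (Fin 2) | x.length = 13 ∧ WeaklySelfAvoiding x} =
      {[0, 0, 1, 0, 1, 1, 1, 1, 1, 1, 0, 1, 0],
       [0, 0, 1, 0, 1, 1, 1, 1, 1, 1, 0, 1, 1],
       [0, 0, 1, 1, 1, 1, 0, 1, 0, 1, 0, 1, 0],
       [0, 0, 1, 1, 1, 1, 0, 1, 0, 1, 0, 1, 1],
       [1, 1, 0, 1, 0, 0, 0, 0, 0, 0, 1, 0, 1],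
       [1, 1, 0, 1, 0, 0, 0, 0, 0, 0, 1, 0, 0],
       [1, 1, 0, 0, 0, 0, 1, 0, 1, 0, 1, 0, 1],
       [1, 1, 0, 0, 0, 0, 1, 0, 1, 0, 1, 0, 0]} := by
  ext x
  rw [Set.mem_ofPred_eq, ← mem_weaklySelfAvoidingWords]
  have h : weaklySelfAvoidingWords 13 =
      [[0, 0, 1, 0, 1, 1, 1, 1, 1, 1, 0, 1, 0],
       [0, 0, 1, 0, 1, 1, 1, 1, 1, 1, 0, 1, 1],
       [0, 0, 1, 1, 1, 1, 0, 1, 0, 1, 0, 1, 0],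
       [0, 0, 1, 1, 1, 1, 0, 1, 0, 1, 0, 1, 1],
       [1, 1, 0, 0, 0, 0, 1, 0, 1, 0, 1, 0, 0],
       [1, 1, 0, 0, 0, 0, 1, 0, 1, 0, 1, 0, 1],
       [1, 1, 0, 1, 0, 0, 0, 0, 0, 0, 1, 0, 0],
       [1, 1, 0, 1, 0, 0, 0, 0, 0, 0, 1, 0, 1]] := by
    decide +kernel
  rw [h]
  simp only [List.mem_cons, List.not_mem_nil, or_false, Set.mem_insert_iff,
    Set.mem_singleton_iff]
  tauto
end

section
/- There exists an infinite weakly self-avoiding word over a three-letter alphabet {0,1,2}. -/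
/-- The factor `x[a..b]` of a 1-indexed infinite word `x`. -/
def extractInf {α : Type*} (x : ℕ → α) (a b : ℕ) : List α :=
  (List.range (b + 1 - a)).map (fun k => x (a + k))

/-- An infinite word `x` is weakly self-avoiding if for all `i, j` with `1 ≤ i < j`,
the word `x[i..2i]` is not a factor of `x[j..2j]`. -/
def WeaklySelfAvoidingInf {α : Type*} (x : ℕ → α) : Prop :=
  ∀ i j : ℕ, 1 ≤ i → i < j → ¬ (extractInf x i (2 * i) <:+: extractInf x j (2 * j))

/-- The position of the `k`-th letter `0` in the word `twoTwoRuns`. -/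
def zeroPos (k : ℕ) : ℕ := (k + 1) * (k + 2) / 2 + 2

theorem two_mul_zeroPos (k : ℕ) : 2 * zeroPos k = k * k + 3 * k + 6 := by
  have h : 2 ∣ (k + 1) * (k + 2) := (Nat.even_mul_succ_self (k + 1)).two_dvd
  have h' := Nat.mul_div_cancel' h
  unfold zeroPos
  linarith

theorem zeroPos_succ (k : ℕ) : zeroPos (k + 1) = zeroPos k + k + 2 := by
  have h := two_mul_zeroPos k
  have h' := two_mul_zeroPos (k + 1)
  linarith

theorem strictMono_zeroPos : StrictMono zeroPos :=
  strictMono_nat_of_lt_succ fun k => by rw [zeroPos_succ]; omega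

theorem three_le_zeroPos (k : ℕ) : 3 ≤ zeroPos k := by
  have := two_mul_zeroPos k
  omega

open Classical in
/-- The word `2 2 0 1 0 1 1 0 1 1 1 0 ⋯`, where the runs of `1` have lengths `1, 2, 3, …`. -/
noncomputable def twoTwoRuns (i : ℕ) : Fin 3 :=
  if i ≤ 2 then 2 else if ∃ k, zeroPos k = i then 0 else 1

theorem twoTwoRuns_eq_two {i : ℕ} : twoTwoRuns i = 2 ↔ i ≤ 2 := by
  unfold twoTwoRuns
  split_ifs <;> simp_all

theorem twoTwoRuns_eq_zero {i : ℕ} : twoTwoRuns i = 0 ↔ ∃ k, zeroPos k = i := by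
  unfold twoTwoRuns
  split_ifs with h h'
  · simp only [Fin.reduceEq, false_iff, not_exists]
    intro k hk
    have := three_le_zeroPos k
    omega
  · simpa using h'
  · simpa using h'

/-- Every window `[i, 2i]` with `3 ≤ i` contains two consecutive zeros of `twoTwoRuns`. -/
theorem exists_zeroPos_mem_window {i : ℕ} (hi : 3 ≤ i) :
    ∃ m, i ≤ zeroPos m ∧ zeroPos (m + 1) ≤ 2 * i := by
  have hex : ∃ m, i ≤ zeroPos m := ⟨i, strictMono_zeroPos.le_apply⟩
  classical
  refine ⟨Nat.find hex, Nat.find_spec hex, ?_⟩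
  rcases hm : Nat.find hex with _ | m
  · have := two_mul_zeroPos (0 + 1)
    omega
  · have hlt : zeroPos m < i := not_le.mp (Nat.find_min hex (by omega))
    have h := two_mul_zeroPos m
    have h₁ := zeroPos_succ m
    have h₂ := zeroPos_succ (m + 1)
    have : m ≤ m * m := Nat.le_mul_self m
    omega

/-- The factor `x[i..2i]` of `twoTwoRuns` does not occur at any later position. -/
theorem twoTwoRuns_window_not_recurrent {i p : ℕ} (hi : 1 ≤ i) (hp : i < p) :
    ¬ ∀ k ≤ i, twoTwoRuns (p + k) = twoTwoRuns (i + k) := by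
  intro h
  rcases le_or_gt i 2 with hi2 | hi2
  · have h₀ : p + 0 ≤ 2 :=
      twoTwoRuns_eq_two.mp ((h 0 (by omega)).trans (twoTwoRuns_eq_two.mpr (by omega)))
    have h₁ : p + 1 ≤ 2 :=
      twoTwoRuns_eq_two.mp ((h 1 hi).trans (twoTwoRuns_eq_two.mpr (by omega)))
    omega
  · obtain ⟨m, hm, hm'⟩ := exists_zeroPos_mem_window hi2
    have hs := zeroPos_succ m
    obtain ⟨a, ha⟩ := twoTwoRuns_eq_zero.mp ((h (zeroPos m - i) (by omega)).trans
      (twoTwoRuns_eq_zero.mpr ⟨m, by omega⟩))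
    obtain ⟨b, hb⟩ := twoTwoRuns_eq_zero.mp ((h (zeroPos (m + 1) - i) (by omega)).trans
      (twoTwoRuns_eq_zero.mpr ⟨m + 1, by omega⟩))
    have hma : m < a := strictMono_zeroPos.lt_iff_lt.mp (by omega)
    have hab : a < b := strictMono_zeroPos.lt_iff_lt.mp (by omega)
    have hle : zeroPos (a + 1) ≤ zeroPos b := strictMono_zeroPos.monotone hab
    have := zeroPos_succ a
    omega

/-- A window that is a factor of a later window recurs at a later position. -/
theorem exists_recurrence_of_extractInf_isInfix {α : Type*} {x : ℕ → α} {i j : ℕ}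
    (h : extractInf x i (2 * i) <:+: extractInf x j (2 * j)) :
    ∃ p, j ≤ p ∧ ∀ k ≤ i, x (p + k) = x (i + k) := by
  obtain ⟨s, t, hst⟩ := h
  refine ⟨j + s.length, by omega, fun k hk => ?_⟩
  have hlen := congrArg List.length hst
  simp only [extractInf, List.length_append, List.length_map, List.length_range] at hlen
  have hget := congrArg (fun l => l[s.length + k]?) hst
  simp only [List.append_assoc] at hget
  rw [List.getElem?_append_right (by omega), List.getElem?_append_left
    (by simp only [extractInf, List.length_map, List.length_range]; omega)] at hget
  simp only [extractInf, List.getElem?_map, Nat.add_sub_cancel_left] at hget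
  rw [List.getElem?_range (by omega), List.getElem?_range (by omega)] at hget
  simpa [add_assoc] using hget.symm

theorem stmt_8 :
    ∃ x : ℕ → Fin 3, WeaklySelfAvoidingInf x := by
  refine ⟨twoTwoRuns, fun i j hi hij h => ?_⟩
  obtain ⟨p, hp, hrec⟩ := exists_recurrence_of_extractInf_isInfix h
  exact twoTwoRuns_window_not_recurrent hi (hij.trans_le hp) hrec
end

section
/- Define f_{2n+1} = 5·2^n − 2 for n ≥ 0 and f_{2n} = 7·2^{n−1} − 2 for n ≥ 1. Let x be the infinite word over {0,1,2} with x[1] = x[2] = 2, x[p] = 0 exactly when p = f_i for some i ≥ 1, and x[p] = 1 for all other positions p. Then x is weakly self-avoiding. -/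
/-- An occurrence of `x[i..2i]` inside `x[j..2j]`, expressed letter by letter. -/
theorem exists_shift_of_extractInf_infix {α : Type*} {x : ℕ → α} {i j : ℕ} (hij : i < j)
    (h : extractInf x i (2 * i) <:+: extractInf x j (2 * j)) :
    ∃ d, 1 ≤ d ∧ ∀ p, i ≤ p → p ≤ 2 * i → x p = x (p + d) := by
  obtain ⟨s, t, hst⟩ := h
  refine ⟨j + s.length - i, by omega, fun p hp hp' => ?_⟩
  have hlen := congrArg List.length hst
  simp only [extractInf, List.length_append, List.length_map, List.length_range] at hlen
  have hget := congrArg (fun l => l[s.length + (p - i)]?) hst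
  simp only [extractInf, List.append_assoc] at hget
  rw [List.getElem?_append_right (by omega), List.getElem?_append_left (by simp; omega),
    List.getElem?_map, List.getElem?_map, List.getElem?_range (by omega),
    List.getElem?_range (by omega)] at hget
  simp only [Option.map_some, Option.some.injEq] at hget
  convert hget using 2 <;> omega

/-- If the gaps of `g` increase strictly, then a gap of `g` is smaller than any difference of
two later values. -/
theorem gap_lt_of_convex {g : ℕ → ℕ} (hmono : StrictMono g)
    (hconv : ∀ k, 2 * g (k + 1) < g k + g (k + 2)) {a c e : ℕ} (hac : a < c) (hce : c < e) :
    g (a + 1) + g c < g a + g e := by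
  have hgap : StrictMono fun k => (g (k + 1) : ℤ) - g k :=
    strictMono_nat_of_lt_succ fun k => by have := hconv k; grind
  have h₁ := hgap hac
  have h₂ : g (c + 1) ≤ g e := hmono.monotone hce
  simp only at h₁
  omega

theorem stmt_9 (f : ℕ → ℕ) (x : ℕ → Fin 3)
    (hfodd : ∀ n : ℕ, f (2 * n + 1) = 5 * 2 ^ n - 2)
    (hfeven : ∀ n : ℕ, 1 ≤ n → f (2 * n) = 7 * 2 ^ (n - 1) - 2)
    (hx1 : x 1 = 2) (hx2 : x 2 = 2)
    (hx0 : ∀ p : ℕ, 1 ≤ p → (x p = 0 ↔ ∃ i : ℕ, 1 ≤ i ∧ f i = p))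
    (hx1' : ∀ p : ℕ, 3 ≤ p → x p ≠ 0 → x p = 1) :
    WeaklySelfAvoidingInf x := by
  obtain ⟨g, hg⟩ : ∃ g : ℕ → ℕ, ∀ k, g k = f (k + 1) := ⟨_, fun _ => rfl⟩
  have hg0 : g 0 = 3 := by simpa [hg] using hfodd 0
  have hg1 : g 1 = 5 := by simpa [hg] using hfeven 1 le_rfl
  have hrec : ∀ k, g (k + 2) = 2 * g k + 2 := by
    intro k
    rw [hg, hg]
    obtain ⟨n, rfl | rfl⟩ := k.even_or_odd'
    · have h := hfodd (n + 1)
      rw [pow_succ] at h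
      rw [hfodd, show 2 * n + 2 + 1 = 2 * (n + 1) + 1 by ring, h]
      have := Nat.one_le_two_pow (n := n)
      omega
    · have h := hfeven (n + 1) (by omega)
      have h' := hfeven (n + 2) (by omega)
      rw [show n + 2 - 1 = n + 1 by omega, pow_succ] at h'
      rw [show n + 1 - 1 = n by omega] at h
      rw [show 2 * n + 1 + 1 = 2 * (n + 1) by ring, h,
        show 2 * n + 1 + 2 + 1 = 2 * (n + 2) by ring, h']
      have := Nat.one_le_two_pow (n := n)
      omega
  have hmono : StrictMono g := strictMono_nat_of_lt_succ fun k => by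
    induction k using Nat.twoStepInduction with
    | zero => simp [hg0, hg1]
    | one => simp [hg0, hg1, hrec 0]
    | more k ih _ => rw [hrec k, show k + 2 + 1 = k + 1 + 2 by ring, hrec (k + 1)]; omega
  have hconv : ∀ k, 2 * g (k + 1) < g k + g (k + 2) := fun k => by
    induction k using Nat.twoStepInduction with
    | zero => simp [hg0, hg1, hrec 0]
    | one => have := hrec 0; have := hrec 1; simp_all
    | more k ih _ =>
      have h₀ := hrec k
      have h₁ := hrec (k + 1)
      have h₂ := hrec (k + 2)
      rw [show k + 2 + 1 = k + 1 + 2 by ring]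
      omega
  have hzero : ∀ p, 1 ≤ p → (x p = 0 ↔ ∃ k, g k = p) := fun p hp => by
    rw [hx0 p hp]
    constructor
    · rintro ⟨i, hi, rfl⟩
      exact ⟨i - 1, by rw [hg, Nat.sub_add_cancel hi]⟩
    · rintro ⟨k, rfl⟩
      exact ⟨k + 1, by omega, (hg k).symm⟩
  have hne2 : ∀ p, 3 ≤ p → x p ≠ 2 := fun p hp h2 => by
    have := hx1' p hp (by rw [h2]; decide)
    rw [h2] at this
    exact absurd this (by decide)
  intro i j hi hij hinf
  obtain ⟨d, hd, hshift⟩ := exists_shift_of_extractInf_infix hij hinf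
  obtain hi2 | hi3 : i ≤ 2 ∨ 3 ≤ i := by omega
  · exact hne2 (2 + d) (by omega) ((hshift 2 (by omega) (by omega)).symm.trans hx2)
  obtain ⟨a, hia, hai⟩ : ∃ a, i ≤ g a ∧ g (a + 1) ≤ 2 * i := by
    classical
    have hex : ∃ a, i ≤ g a := ⟨i, hmono.le_apply⟩
    refine ⟨Nat.find hex, Nat.find_spec hex, ?_⟩
    rcases hm : Nat.find hex with _ | m
    · simpa [hg1] using by omega
    · have := Nat.find_min hex (m := m) (by omega)
      have := hrec m
      rw [show m + 1 + 1 = m + 2 by ring]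
      omega
  have hlt : g a < g (a + 1) := hmono a.lt_succ_self
  have shift_zero : ∀ k, i ≤ g k → g k ≤ 2 * i → ∃ c, g c = g k + d := fun k h₁ h₂ =>
    (hzero _ (by omega)).1 <| (hshift _ h₁ h₂).symm.trans ((hzero _ (by omega)).2 ⟨k, rfl⟩)
  obtain ⟨c, hc⟩ := shift_zero a hia (by omega)
  obtain ⟨e, he⟩ := shift_zero (a + 1) (by omega) hai
  have := gap_lt_of_convex hmono hconv (hmono.lt_iff_lt.1 (by omega : g a < g c))
    (hmono.lt_iff_lt.1 (by omega : g c < g e))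
  omega
end

section
/- Define f_{2n+1} = 5·2^n − 2 for n ≥ 0 and f_{2n} = 7·2^{n−1} − 2 for n ≥ 1. Let x be the infinite word over {0,1,2} with x[1] = x[2] = 2, x[p] = 0 exactly when p = f_i for some i ≥ 1, and x[p] = 1 for all other positions p. Then for every i ≥ 3, the factor x[i..2i] contains exactly two occurrences of the letter 0; equivalently, for every i ≥ 3 exactly two of the numbers f_1, f_2, f_3, … lie in the interval [i, 2i]. -/
/-- Sliding the window `x[i..2i]` to `x[i+1..2i+2]` drops `x[i]` and appends `x[2i+1]`, `x[2i+2]`. -/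
theorem count_extractInf_succ {α : Type*} [DecidableEq α] (x : ℕ → α) (a : α) (i : ℕ) :
    (extractInf x (i + 1) (2 * (i + 1))).count a + [x i].count a =
      (extractInf x i (2 * i)).count a + [x (2 * i + 1)].count a + [x (2 * i + 2)].count a := by
  have hleft : extractInf x i (2 * i) =
      x i :: (List.range i).map (fun k => x (i + 1 + k)) := by
    have hlen : 2 * i + 1 - i = i + 1 := by omega
    simp [extractInf, hlen, List.range_succ_eq_map, Function.comp_def, Nat.add_assoc,
      Nat.add_comm 1]
  have hright : extractInf x (i + 1) (2 * (i + 1)) =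
      (List.range i).map (fun k => x (i + 1 + k)) ++ [x (2 * i + 1), x (2 * i + 2)] := by
    have hlen : 2 * (i + 1) + 1 - (i + 1) = i + 1 + 1 := by omega
    have h₁ : i + 1 + i = 2 * i + 1 := by omega
    have h₂ : i + 1 + (i + 1) = 2 * i + 2 := by omega
    simp [extractInf, hlen, List.range_succ, h₁, h₂]
  rw [hleft, hright]
  simp only [List.count_append, List.count_cons, List.count_nil]
  omega

theorem stmt_10 (f : ℕ → ℕ) (x : ℕ → Fin 3)
    (hfodd : ∀ n : ℕ, f (2 * n + 1) = 5 * 2 ^ n - 2)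
    (hfeven : ∀ n : ℕ, 1 ≤ n → f (2 * n) = 7 * 2 ^ (n - 1) - 2)
    (hx1 : x 1 = 2) (hx2 : x 2 = 2)
    (hx0 : ∀ p : ℕ, 1 ≤ p → (x p = 0 ↔ ∃ i : ℕ, 1 ≤ i ∧ f i = p))
    (hx1' : ∀ p : ℕ, 3 ≤ p → x p ≠ 0 → x p = 1) :
    ∀ i : ℕ, 3 ≤ i → (extractInf x i (2 * i)).count (0 : Fin 3) = 2 := by
  have f_one : f 1 = 3 := by simpa using hfodd 0
  have f_two : f 2 = 5 := by simpa using hfeven 1 le_rfl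
  have f_add_two : ∀ j, 1 ≤ j → f (j + 2) = 2 * f j + 2 := by
    intro j hj
    obtain ⟨n, rfl | rfl⟩ := Nat.even_or_odd' j
    · obtain ⟨m, rfl⟩ : ∃ m, n = m + 1 := ⟨n - 1, by omega⟩
      have h₁ := hfeven (m + 1) (by omega)
      have h₂ := hfeven (m + 1 + 1) (by omega)
      rw [show 2 * (m + 1) + 2 = 2 * (m + 1 + 1) by ring, h₁, h₂]
      have := Nat.one_le_two_pow (n := m)
      simp only [Nat.add_sub_cancel, pow_succ]
      omega
    · rw [show 2 * n + 1 + 2 = 2 * (n + 1) + 1 by ring, hfodd, hfodd]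
      have := Nat.one_le_two_pow (n := n)
      simp only [pow_succ]
      omega
  have index_cases : ∀ j, 1 ≤ j → j = 1 ∨ j = 2 ∨ ∃ k, 1 ≤ k ∧ j = k + 2 := by
    intro j hj
    by_cases h : j ≤ 2
    · omega
    · exact Or.inr (Or.inr ⟨j - 2, by omega, by omega⟩)
  have x_even : ∀ p, 1 ≤ p → (x (2 * p + 2) = 0 ↔ x p = 0) := by
    intro p hp
    rw [hx0 _ (by omega), hx0 _ hp]
    constructor
    · rintro ⟨j, hj, hfj⟩
      obtain rfl | rfl | ⟨k, hk, rfl⟩ := index_cases j hj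
      · omega
      · omega
      · have := f_add_two k hk
        exact ⟨k, hk, by omega⟩
    · rintro ⟨k, hk, rfl⟩
      exact ⟨k + 2, by omega, f_add_two k hk⟩
  have x_odd : ∀ p, 3 ≤ p → x (2 * p + 1) ≠ 0 := by
    intro p hp h
    obtain ⟨j, hj, hfj⟩ := (hx0 _ (by omega)).1 h
    obtain rfl | rfl | ⟨k, hk, rfl⟩ := index_cases j hj
    · omega
    · omega
    · have := f_add_two k hk
      omega
  intro i hi
  induction i, hi using Nat.le_induction with
  | base =>
    have x_three : x 3 = 0 := (hx0 3 (by omega)).2 ⟨1, le_rfl, f_one⟩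
    have x_five : x 5 = 0 := (hx0 5 (by omega)).2 ⟨2, by omega, f_two⟩
    have x_four : x 4 ≠ 0 := fun h => by simpa [hx1] using (x_even 1 le_rfl).1 h
    have x_six : x 6 ≠ 0 := fun h => by simpa [hx2] using (x_even 2 (by omega)).1 h
    simp [extractInf, List.range_succ, x_three, x_four, x_five, x_six]
  | succ i hi ih =>
    have hslide := count_extractInf_succ x 0 i
    have heven : [x (2 * i + 2)].count 0 = [x i].count 0 := by
      simp [List.count_singleton, x_even i (by omega)]
    have hodd : [x (2 * i + 1)].count 0 = 0 := by
      simp [x_odd i hi]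
    omega
end

section
/- There exists an infinite word x over the binary alphabet {0,1} such that for all i, j with 2 ≤ i < j, the word x[i..2i] is not a factor of x[j..2j]. -/
/-- If the factor `x[a..b]` occurs in `x[c..d]`, it occurs in `x` at some position `p ≥ c`. -/
theorem exists_shift_of_extractInf_isInfix {α : Type*} {x : ℕ → α} {a b c d : ℕ}
    (h : extractInf x a b <:+: extractInf x c d) :
    ∃ p, c ≤ p ∧ ∀ k, a + k ≤ b → x (p + k) = x (a + k) := by
  obtain ⟨s, t, hst⟩ := h
  refine ⟨c + s.length, Nat.le_add_right _ _, fun k hk => ?_⟩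
  have hlen := congrArg List.length hst
  simp only [extractInf, List.length_append, List.length_map, List.length_range] at hlen
  have hget := congrArg (fun l => l[s.length + k]?) hst
  simp only [extractInf, List.append_assoc] at hget
  rw [List.getElem?_append_right (by omega), List.getElem?_append_left (by simp; omega),
    List.getElem?_eq_getElem (by simp; omega), List.getElem?_eq_getElem (by simp; omega)] at hget
  simp only [List.getElem_map, List.getElem_range, Option.some.injEq] at hget
  rw [show s.length + k - s.length = k by omega] at hget
  rw [hget, Nat.add_assoc]

/-- The positions `k (k + 1) / 2 + 3`, whose consecutive gaps are `1, 2, 3, …`. -/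
def shiftedTriangular (k : ℕ) : ℕ := ∑ m ∈ Finset.range (k + 1), m + 3

theorem shiftedTriangular_succ (k : ℕ) :
    shiftedTriangular (k + 1) = shiftedTriangular k + (k + 1) := by
  simp only [shiftedTriangular, Finset.sum_range_succ _ (k + 1)]
  omega

theorem shiftedTriangular_strictMono : StrictMono shiftedTriangular :=
  strictMono_nat_of_lt_succ fun k => by rw [shiftedTriangular_succ]; omega

theorem two_mul_add_one_le_shiftedTriangular (k : ℕ) : 2 * k + 1 ≤ shiftedTriangular k := by
  induction k with
  | zero => simp [shiftedTriangular]
  | succ k ih =>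
    rw [shiftedTriangular_succ]
    rcases k with _ | k
    · simp [shiftedTriangular]
    · omega

/-- Every window `[i, 2i]` with `2 ≤ i` contains two consecutive shifted triangular numbers. -/
theorem exists_shiftedTriangular_mem_window {i : ℕ} (hi : 2 ≤ i) :
    ∃ k, i ≤ shiftedTriangular k ∧ shiftedTriangular (k + 1) ≤ 2 * i := by
  have hex : ∃ k, i ≤ shiftedTriangular k := ⟨i, shiftedTriangular_strictMono.le_apply⟩
  classical
  refine ⟨Nat.find hex, Nat.find_spec hex, ?_⟩
  rcases hk : Nat.find hex with _ | k
  · simp [shiftedTriangular, Finset.sum_range_succ]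
    omega
  · have hlt : shiftedTriangular k < i := not_le.mp (Nat.find_min hex (by omega))
    have := two_mul_add_one_le_shiftedTriangular k
    rw [shiftedTriangular_succ, shiftedTriangular_succ]
    omega

/-- No gap between consecutive shifted triangular numbers recurs further to the right. -/
theorem shiftedTriangular_gap_ne {k l m d : ℕ} (hd : 0 < d)
    (hl : shiftedTriangular l = shiftedTriangular k + d) :
    shiftedTriangular m ≠ shiftedTriangular (k + 1) + d := by
  intro hm
  have hkl : k < l := shiftedTriangular_strictMono.lt_iff_lt.mp (by omega)
  rw [shiftedTriangular_succ] at hm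
  have hlm : l < m := shiftedTriangular_strictMono.lt_iff_lt.mp (by omega)
  have := shiftedTriangular_strictMono.monotone (Nat.succ_le_of_lt hlm)
  rw [Nat.succ_eq_add_one, shiftedTriangular_succ] at this
  omega

theorem stmt_12 :
    ∃ x : ℕ → Fin 2, ∀ i j : ℕ, 2 ≤ i → i < j →
      ¬ (extractInf x i (2 * i) <:+: extractInf x j (2 * j)) := by
  classical
  refine ⟨fun n => if n ∈ Set.range shiftedTriangular then 1 else 0, fun i j hi hij h => ?_⟩
  obtain ⟨p, hp, hshift⟩ := exists_shift_of_extractInf_isInfix h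
  obtain ⟨k, hik, hki⟩ := exists_shiftedTriangular_mem_window hi
  have hmono := shiftedTriangular_succ k
  have key : ∀ q, i ≤ shiftedTriangular q → shiftedTriangular q ≤ 2 * i →
      ∃ l, shiftedTriangular l = shiftedTriangular q + (p - i) := by
    intro q hq hq'
    have hx := hshift (shiftedTriangular q - i) (by omega)
    rw [show i + (shiftedTriangular q - i) = shiftedTriangular q by omega,
      show p + (shiftedTriangular q - i) = shiftedTriangular q + (p - i) by omega] at hx
    by_contra hne
    simp [hne] at hx
  obtain ⟨l, hl⟩ := key k hik (by omega)
  obtain ⟨m, hm⟩ := key (k + 1) (by omega) hki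
  exact shiftedTriangular_gap_ne (by omega) hl hm
end
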